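/- Let m ≥ 2, λ > 0, and let t₁, ..., t_m ∈ ℝ be λ-spread for a positive integer n, i.e., ‖(t_r ± t_{r'})/(2π n)‖_{ℝ/ℤ} ≥ λ/n for all 1 ≤ r < r' ≤ m and both choices of sign. Let λ ≤ K = o(n). Then there exists an integer L with L ≍ n/K (i.e., c₁ n/K ≤ L ≤ c₂ n/K for constants depending only on m) such that ‖L(t_r ± t_{r'})/(2π n)‖_{ℝ/ℤ} ≥ c(m) λ/K for all 1 ≤ r < r' ≤ m and both signs, where c(m) > 0 depends only on m. -/

import Mathlib

/-- Distance from a real number to the nearest integer. -/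
noncomputable def dist01 (x : ℝ) : ℝ := |x - round x|

lemma card_int_le (S : Finset ℤ) (d : ℝ) (_hd : 0 ≤ d)
    (h : ∀ x ∈ S, ∀ y ∈ S, |(x : ℝ) - y| ≤ d) : S.card ≤ ⌊d⌋₊ + 1 := by
  rcases S.eq_empty_or_nonempty with rfl | hS
  · simp
  have hsub : S ⊆ Finset.Icc (S.min' hS) (S.max' hS) := by
    intro x hx
    exact Finset.mem_Icc.2 ⟨S.min'_le x hx, S.le_max' x hx⟩
  have hc := Finset.card_le_card hsub
  rw [Int.card_Icc] at hc
  have h1 := h _ (S.max'_mem hS) _ (S.min'_mem hS)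
  have h2 := (abs_le.1 h1).2
  have h3 : (S.max' hS - S.min' hS).toNat ≤ ⌊d⌋₊ := by
    apply Nat.le_floor
    have h4 : (0 : ℤ) ≤ S.max' hS - S.min' hS := by
      have := S.min'_le _ (S.max'_mem hS)
      omega
    have h5 : (((S.max' hS - S.min' hS).toNat : ℤ) : ℝ) = ((S.max' hS - S.min' hS : ℤ) : ℝ) := by
      rw [Int.toNat_of_nonneg h4]
    rw [Int.cast_natCast] at h5
    rw [h5]
    push_cast
    exact h2
  omega

lemma dist01_le (x : ℝ) (z : ℤ) : dist01 x ≤ |x - z| := round_le x z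

lemma count_bad (θ η κ : ℝ) (hη : η ≠ 0) (hκ : 0 < κ) (hκ2 : κ ≤ 1 / 2) (Y : ℕ) :
    (((Finset.Ico (Y : ℤ) (2 * Y)).filter (fun l : ℤ => dist01 (θ + l * η) < κ)).card : ℝ)
      ≤ (2 * κ / |η| + 1) * (|η| * Y + 2) := by
  set S := (Finset.Ico (Y : ℤ) (2 * Y)).filter (fun l : ℤ => dist01 (θ + l * η) < κ) with hS
  have hpos : 0 < |η| := abs_pos.2 hη
  have hmem : ∀ l ∈ S, (Y : ℝ) ≤ l ∧ (l : ℝ) ≤ 2 * Y ∧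
      |θ + l * η - round (θ + l * η)| < κ := by
    intro l hl
    rw [hS, Finset.mem_filter, Finset.mem_Ico] at hl
    refine ⟨by exact_mod_cast hl.1.1, by exact_mod_cast hl.1.2.le, hl.2⟩
  have h1 : S.card ≤ (⌊2 * κ / |η|⌋₊ + 1) * (S.image (fun l : ℤ => round (θ + l * η))).card := by
    apply Finset.card_le_mul_card_image
    intro w _
    apply card_int_le _ _ (by positivity)
    intro x hx y hy
    rw [Finset.mem_filter] at hx hy
    have hx1 := (hmem x hx.1).2.2
    have hy1 := (hmem y hy.1).2.2
    rw [hx.2] at hx1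
    rw [hy.2] at hy1
    rw [le_div_iff₀ hpos, ← abs_mul]
    rw [abs_lt] at hx1 hy1
    rw [abs_le]
    constructor <;> linarith [hx1.1, hx1.2, hy1.1, hy1.2]
  have h2 : (S.image (fun l : ℤ => round (θ + l * η))).card ≤ ⌊|η| * Y + 1⌋₊ + 1 := by
    apply card_int_le _ _ (by positivity)
    intro w hw w' hw'
    rw [Finset.mem_image] at hw hw'
    obtain ⟨x, hx, rfl⟩ := hw
    obtain ⟨y, hy, rfl⟩ := hw'
    obtain ⟨a1, a2, a3⟩ := hmem x hx
    obtain ⟨b1, b2, b3⟩ := hmem y hy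
    have h3 : |((x : ℝ) - y) * η| ≤ |η| * Y := by
      rw [abs_mul, mul_comm]
      apply mul_le_mul_of_nonneg_left _ hpos.le
      rw [abs_le]
      constructor <;> linarith
    rw [abs_lt] at a3 b3
    rw [abs_le] at h3 ⊢
    constructor <;> linarith [a3.1, a3.2, b3.1, b3.2, h3.1, h3.2]
  have f1 : (⌊2 * κ / |η|⌋₊ : ℝ) ≤ 2 * κ / |η| := Nat.floor_le (by positivity)
  have f2 : (⌊|η| * Y + 1⌋₊ : ℝ) ≤ |η| * Y + 1 := Nat.floor_le (by positivity)
  have h4 : S.card ≤ (⌊2 * κ / |η|⌋₊ + 1) * (⌊|η| * Y + 1⌋₊ + 1) :=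
    h1.trans (Nat.mul_le_mul_left _ h2)
  calc (S.card : ℝ) ≤ ((⌊2 * κ / |η|⌋₊ : ℝ) + 1) * ((⌊|η| * Y + 1⌋₊ : ℝ) + 1) := by
        exact_mod_cast h4
    _ ≤ (2 * κ / |η| + 1) * (|η| * Y + 2) := by
        apply mul_le_mul <;> first | positivity | linarith

lemma dirichlet_sim {ι : Type} [Fintype ι] (θ : ι → ℝ) (k : ℕ) (hk : 0 < k) :
    ∃ D : ℕ, 0 < D ∧ D ≤ k ^ (Fintype.card ι) ∧ ∀ j, ∃ z : ℤ, |D * θ j - z| ≤ 1 / k := by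
  classical
  have hkR : (0 : ℝ) < k := by exact_mod_cast hk
  have hf : ∀ (a : ℕ) (j : ι), ⌊Int.fract (a * θ j) * k⌋₊ < k := by
    intro a j
    rw [Nat.floor_lt (mul_nonneg (Int.fract_nonneg _) hkR.le)]
    have := Int.fract_lt_one (a * θ j)
    nlinarith
  let f : ℕ → (ι → Fin k) := fun a j => ⟨_, hf a j⟩
  have hcard : (Finset.univ : Finset (ι → Fin k)).card
      < (Finset.range (k ^ (Fintype.card ι) + 1)).card := by
    simp
  obtain ⟨a, ha, b, hb, hab, hfab⟩ := Finset.exists_ne_map_eq_of_card_lt_of_maps_to hcard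
    (f := f) (fun _ _ => Finset.mem_univ _)
  have key : ∀ a b : ℕ, a < b → b ≤ k ^ (Fintype.card ι) → f a = f b →
      ∃ D : ℕ, 0 < D ∧ D ≤ k ^ (Fintype.card ι) ∧ ∀ j, ∃ z : ℤ, |D * θ j - z| ≤ 1 / k := by
    intro a b hab hb hf'
    refine ⟨b - a, by omega, by omega, fun j => ⟨⌊b * θ j⌋ - ⌊a * θ j⌋, ?_⟩⟩
    have hj : ⌊Int.fract (a * θ j) * k⌋₊ = ⌊Int.fract (b * θ j) * k⌋₊ := by
      have := congrFun hf' j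
      exact congrArg Fin.val this
    have A1 := Nat.floor_le (mul_nonneg (Int.fract_nonneg (a * θ j)) hkR.le)
    have A2 := Nat.lt_floor_add_one (Int.fract (a * θ j) * k)
    have B1 := Nat.floor_le (mul_nonneg (Int.fract_nonneg (b * θ j)) hkR.le)
    have B2 := Nat.lt_floor_add_one (Int.fract (b * θ j) * k)
    rw [hj] at A1 A2
    have e : ((b - a : ℕ) : ℝ) * θ j - ((⌊b * θ j⌋ - ⌊a * θ j⌋ : ℤ) : ℝ)
        = Int.fract (b * θ j) - Int.fract (a * θ j) := by
      rw [Nat.cast_sub hab.le]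
      unfold Int.fract
      push_cast
      ring
    rw [e, le_div_iff₀ hkR]
    have e2 : ∀ x : ℝ, |x| * k = |x * k| := fun x => by rw [abs_mul, abs_of_pos hkR]
    rw [e2, abs_le]
    constructor <;> linarith
  rw [Finset.mem_range] at ha hb
  rcases lt_or_gt_of_ne hab with h | h
  · exact key a b h (by omega) hfab
  · exact key b a h (by omega) hfab.symm

set_option maxHeartbeats 1600000 in
lemma core {ι : Type} [Fintype ι] :
    ∃ c₁ c₂ c₃ X₀ : ℝ, 0 < c₁ ∧ 0 < c₂ ∧ 0 < c₃ ∧ 0 < X₀ ∧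
      ∀ (X δ : ℝ) (θ : ι → ℝ), X₀ ≤ X → 0 < δ → δ * X ≤ 1 → (∀ j, δ ≤ dist01 (θ j)) →
        ∃ L : ℤ, c₁ * X ≤ L ∧ (L : ℝ) ≤ c₂ * X ∧ ∀ j, c₃ * (δ * X) ≤ dist01 (L * θ j) := by
  classical
  set N : ℕ := Fintype.card ι + 1 with hN
  have hN1 : (1 : ℝ) ≤ N := by rw [hN]; push_cast; linarith [(Nat.cast_nonneg (Fintype.card ι) : (0:ℝ) ≤ _)]
  set k : ℕ := 8 * N with hk
  have hkpos : 0 < k := by omega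
  set R : ℕ := k ^ (Fintype.card ι) with hR
  have hR0 : 0 < R := by positivity
  have hR1 : (1 : ℝ) ≤ R := by exact_mod_cast hR0
  set ε : ℝ := 1 / (16 * R) with hε
  have hεpos : 0 < ε := by positivity
  have hε1 : ε ≤ 1 / 16 := by
    rw [hε]; apply one_div_le_one_div_of_le <;> linarith
  set κ : ℝ := ε / (32 * N) with hκ
  have hκpos : 0 < κ := by positivity
  have hκN : κ * (32 * N) = ε := by rw [hκ]; field_simp
  have hκε : κ ≤ ε := by nlinarith
  refine ⟨1 / 2, 2 * R, κ, 16 * N + 1, by norm_num, by positivity, hκpos, by positivity, ?_⟩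
  intro X δ θ hX hδ hδX hθ
  obtain ⟨D, hD0, hDR, hDz⟩ := dirichlet_sim θ k hkpos
  choose z hz using hDz
  set η : ι → ℝ := fun j => D * θ j - z j with hη
  have hXpos : 0 < X := by linarith
  set Y : ℕ := ⌊X⌋₊ with hY
  have hY1 : (Y : ℝ) ≤ X := Nat.floor_le hXpos.le
  have hY2 : X < Y + 1 := Nat.lt_floor_add_one X
  have hY16 : 16 * (N : ℝ) ≤ Y := by linarith
  have hYpos : (0 : ℝ) < Y := by linarith
  have hD1 : (1 : ℝ) ≤ D := by exact_mod_cast hD0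
  have hDR' : (D : ℝ) ≤ R := by exact_mod_cast hDR
  have hlin : ∀ (j : ι) (l : ℤ), ((1 + D * l : ℤ) : ℝ) * θ j = θ j + l * η j + ((l * z j : ℤ) : ℝ) := by
    intro j l
    simp only [hη]
    push_cast
    ring
  -- bad sets
  let B : ι → Finset ℤ := fun j => (Finset.Ico (Y : ℤ) (2 * Y)).filter
    (fun l : ℤ => ε ≤ |η j| * Y ∧ dist01 (θ j + l * η j) < κ)
  have hB : ∀ j, ((B j).card : ℝ) ≤ Y / (2 * N) := by
    intro j
    by_cases hj : ε ≤ |η j| * Y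
    · have hηpos : 0 < |η j| := by
        by_contra hcon
        have : |η j| = 0 := le_antisymm (not_lt.1 hcon) (abs_nonneg _)
        rw [this] at hj
        linarith
      have hcb := count_bad (θ j) (η j) κ (abs_pos.1 hηpos) hκpos (by linarith) Y
      have hsub : (B j).card ≤ ((Finset.Ico (Y : ℤ) (2 * Y)).filter
          (fun l : ℤ => dist01 (θ j + l * η j) < κ)).card := by
        apply Finset.card_le_card
        intro l hl
        rw [Finset.mem_filter] at hl ⊢
        exact ⟨hl.1, hl.2.2⟩
      have hsub' : ((B j).card : ℝ) ≤ _ := (Nat.cast_le.2 hsub).trans hcb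
      refine hsub'.trans ?_
      have e1 : (2 * κ / |η j| + 1) * (|η j| * Y + 2)
          = 2 * κ * Y + |η j| * Y + 4 * κ / |η j| + 2 := by
        field_simp
        ring
      rw [e1]
      have b1 : 2 * κ * Y ≤ Y / (8 * N) := by
        rw [le_div_iff₀ (by positivity)]
        have : κ * (32 * N) * Y ≤ 1 * Y := by
          apply mul_le_mul_of_nonneg_right _ hYpos.le
          linarith
        nlinarith
      have b2 : |η j| * Y ≤ Y / (8 * N) := by
        have := hz j
        have hkk : (k : ℝ) = 8 * N := by rw [hk]; push_cast; ring
        rw [hkk] at this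
        calc |η j| * Y ≤ 1 / (8 * N) * Y := mul_le_mul_of_nonneg_right this hYpos.le
          _ = _ := by ring
      have b3 : 4 * κ / |η j| ≤ Y / (8 * N) := by
        rw [div_le_div_iff₀ hηpos (by positivity)]
        nlinarith
      have b4 : 2 ≤ (Y : ℝ) / (8 * N) := by
        rw [le_div_iff₀ (by positivity)]
        linarith
      have e2 : (Y : ℝ) / (2 * N) = 4 * (Y / (8 * N)) := by
        field_simp
        ring
      rw [e2]
      linarith
    · have : B j = ∅ := by
        apply Finset.filter_false_of_mem
        intro l _ h
        exact hj h.1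
      rw [this]
      simp only [Finset.card_empty, Nat.cast_zero]
      positivity
  obtain ⟨l, hl, hlB⟩ : ∃ l ∈ Finset.Ico (Y : ℤ) (2 * Y), l ∉ Finset.univ.biUnion B := by
    apply Finset.exists_mem_notMem_of_card_lt_card
    have h1 : ((Finset.univ.biUnion B).card : ℝ) ≤ ∑ j, ((B j).card : ℝ) := by
      exact_mod_cast Finset.card_biUnion_le
    have h2 : ∑ j, ((B j).card : ℝ) ≤ ∑ _j : ι, (Y : ℝ) / (2 * N) :=
      Finset.sum_le_sum fun j _ => hB j
    rw [Finset.sum_const, Finset.card_univ, nsmul_eq_mul] at h2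
    have h3 : (Fintype.card ι : ℝ) * (Y / (2 * N)) < Y := by
      have : (Fintype.card ι : ℝ) ≤ N := by rw [hN]; push_cast; linarith
      calc (Fintype.card ι : ℝ) * (Y / (2 * N)) ≤ N * (Y / (2 * N)) := by gcongr
        _ = Y / 2 := by field_simp
        _ < Y := by linarith
    have h4 : (Finset.Ico (Y : ℤ) (2 * Y)).card = Y := by
      rw [Int.card_Ico]; omega
    rw [h4]
    exact_mod_cast (h1.trans h2).trans_lt h3
  rw [Finset.mem_Ico] at hl
  have hl1 : (Y : ℝ) ≤ l := by exact_mod_cast hl.1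
  have hl2 : (l : ℝ) + 1 ≤ 2 * Y := by exact_mod_cast hl.2
  set L : ℤ := 1 + D * l with hL
  have hLR : (L : ℝ) = 1 + D * l := by rw [hL]; push_cast; ring
  have hLlow : (1 / 2) * X ≤ L := by
    rw [hLR]
    nlinarith
  have hLup : (L : ℝ) ≤ 2 * D * Y := by
    rw [hLR]
    nlinarith
  have hLpos : (0 : ℝ) < L := by linarith
  refine ⟨L, hLlow, ?_, ?_⟩
  · refine hLup.trans ?_
    gcongr
  intro j
  have hsmall : κ * (δ * X) ≤ κ := by nlinarith
  by_cases hj : ε ≤ |η j| * Y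
  · -- generic angle
    have hnot : ¬ dist01 (θ j + l * η j) < κ := by
      intro h
      apply hlB
      rw [Finset.mem_biUnion]
      refine ⟨j, Finset.mem_univ _, ?_⟩
      rw [Finset.mem_filter, Finset.mem_Ico]
      exact ⟨hl, hj, h⟩
    refine hsmall.trans ((not_lt.1 hnot).trans ?_)
    have h1 := dist01_le (θ j + l * η j) (round (L * θ j) - l * z j)
    refine h1.trans (le_of_eq ?_)
    unfold dist01
    congr 1
    have h2 := hlin j l
    rw [← hL] at h2
    push_cast at h2 ⊢
    linarith
  · -- major arc
    have hηL : |(L : ℝ) * η j| ≤ 1 / 8 := by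
      rw [abs_mul, abs_of_pos hLpos]
      have h1 : |η j| * Y ≤ ε := (not_le.1 hj).le
      have h2 : (L : ℝ) * |η j| ≤ 2 * D * Y * |η j| :=
        mul_le_mul_of_nonneg_right hLup (abs_nonneg _)
      have h3 : (D : ℝ) * (|η j| * Y) ≤ R * ε := by gcongr
      have h4 : (R : ℝ) * ε = 1 / 16 := by rw [hε]; field_simp
      linarith
    unfold dist01
    set w := round ((L : ℝ) * θ j) with hw
    have hDpos : (0 : ℝ) < D := by linarith
    have hθη : (D : ℝ) * θ j = z j + η j := by simp only [hη]; ring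
    have hmain : (D : ℝ) * (L * θ j - w) = ((L * z j - D * w : ℤ) : ℝ) + L * η j := by
      push_cast
      linear_combination (L : ℝ) * hθη
    have habs : (D : ℝ) * |(L : ℝ) * θ j - w| = |((L * z j - D * w : ℤ) : ℝ) + L * η j| := by
      rw [← hmain, abs_mul, abs_of_pos hDpos]
    by_cases hu : L * z j - D * w = 0
    · have hdvd : (D : ℤ) ∣ z j := by
        refine ⟨w - l * z j, ?_⟩
        rw [hL] at hu
        linear_combination hu
      obtain ⟨z', hz'⟩ := hdvd
      rw [hu, Int.cast_zero, zero_add, abs_mul, abs_of_pos hLpos] at habs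
      have h1 : δ ≤ |θ j - z'| := (hθ j).trans (dist01_le _ _)
      have h2 : (D : ℝ) * |θ j - z'| = |η j| := by
        have e3 : ∀ x : ℝ, (D : ℝ) * |x| = |D * x| := fun x => by rw [abs_mul, abs_of_pos hDpos]
        rw [e3]
        congr 1
        have : (z j : ℝ) = D * z' := by rw [hz']; push_cast; ring
        linarith
      have h3 : |(L : ℝ) * θ j - w| = L * |θ j - z'| := by
        apply mul_left_cancel₀ hDpos.ne'
        rw [habs, ← h2]
        ring
      rw [h3]
      have h5 : (1 / 2) * X * δ ≤ L * |θ j - z'| := mul_le_mul hLlow h1 hδ.le hLpos.le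
      have h6 : 0 < δ * X := by positivity
      have h7 : κ * (δ * X) ≤ 1 / 2 * (δ * X) :=
        mul_le_mul_of_nonneg_right (by linarith) h6.le
      linarith
    · have h1 : (1 : ℝ) ≤ |((L * z j - D * w : ℤ) : ℝ)| := by
        exact_mod_cast Int.one_le_abs hu
      have h2 : |((L * z j - D * w : ℤ) : ℝ)| - |(L : ℝ) * η j| ≤
          |((L * z j - D * w : ℤ) : ℝ) + L * η j| := by
        have := abs_sub_abs_le_abs_sub ((L * z j - D * w : ℤ) : ℝ) (-((L : ℝ) * η j))
        rwa [abs_neg, sub_neg_eq_add] at this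
      rw [← habs] at h2
      have h3 : (R : ℝ) * ε = 1 / 16 := by rw [hε]; field_simp
      have h4 : (D : ℝ) * κ ≤ R * ε := by gcongr
      refine hsmall.trans ?_
      apply le_of_mul_le_mul_left _ hDpos
      linarith

/-- If (t₁,...,t_m) is λ-spread and λ ≤ K with K small compared to n
(K = o(n)), then there is an integer L ≍ n/K with
‖L(t_r ± t_{r'})/(2πn)‖_{ℝ/ℤ} ≥ c(m) λ/K for all r < r' and both signs. -/
theorem stmt19 (m : ℕ) (hm : 2 ≤ m) :
    ∃ c₁ c₂ c₃ ε : ℝ, 0 < c₁ ∧ 0 < c₂ ∧ 0 < c₃ ∧ 0 < ε ∧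
      ∀ (n : ℕ), 0 < n → ∀ (K lam : ℝ) (t : Fin m → ℝ),
        0 < lam → lam ≤ K → K ≤ ε * n →
        (∀ r r' : Fin m, r < r' →
          lam / n ≤ dist01 ((t r - t r') / (2 * Real.pi * n)) ∧
          lam / n ≤ dist01 ((t r + t r') / (2 * Real.pi * n))) →
        ∃ L : ℤ, c₁ * n / K ≤ (L : ℝ) ∧ (L : ℝ) ≤ c₂ * n / K ∧
          ∀ r r' : Fin m, r < r' →
            c₃ * lam / K ≤ dist01 ((L : ℝ) * (t r - t r') / (2 * Real.pi * n)) ∧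
            c₃ * lam / K ≤ dist01 ((L : ℝ) * (t r + t r') / (2 * Real.pi * n)) := by
  obtain ⟨c₁, c₂, c₃, X₀, h1, h2, h3, h0, H⟩ :=
    core (ι := {p : Fin m × Fin m // p.1 < p.2} × Bool)
  refine ⟨c₁, c₂, c₃, 1 / X₀, h1, h2, h3, by positivity, ?_⟩
  intro n hn K lam t hlam hK hKn hsp
  have hnR : (0 : ℝ) < n := by exact_mod_cast hn
  have hKpos : 0 < K := by linarith
  obtain ⟨L, hL1, hL2, hL3⟩ := H (n / K) (lam / n)
    (fun q => if q.2 then (t q.1.1.1 - t q.1.1.2) / (2 * Real.pi * n)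
      else (t q.1.1.1 + t q.1.1.2) / (2 * Real.pi * n))
    (by
      rw [le_div_iff₀ hKpos]
      calc X₀ * K ≤ X₀ * (1 / X₀ * n) := by gcongr
        _ = n := by field_simp)
    (by positivity)
    (by
      have : lam / n * (n / K) = lam / K := by field_simp
      rw [this, div_le_one hKpos]
      exact hK)
    (by
      rintro ⟨⟨⟨r, r'⟩, hr⟩, b⟩
      cases b
      · simpa using (hsp r r' hr).2
      · simpa using (hsp r r' hr).1)
  have e : c₃ * (lam / n * (n / K)) = c₃ * lam / K := by field_simp
  refine ⟨L, by rw [mul_div_assoc]; exact hL1, by rw [mul_div_assoc]; exact hL2, ?_⟩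
  intro r r' hr
  have a := hL3 (⟨(r, r'), hr⟩, true)
  have b := hL3 (⟨(r, r'), hr⟩, false)
  rw [e] at a b
  simp only [if_true, Bool.false_eq_true, if_false] at a b
  rw [mul_div_assoc (L : ℝ), mul_div_assoc (L : ℝ)]
  exact ⟨a, b⟩
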